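/- For all integers p ≥ 1, k ≥ 1 and real numbers t_1, ..., t_p, the multivariate Fuss-Narayana polynomial F_k(t_1, ..., t_p) = Σ (1/k) ∏_{i=0}^{p} C(k, j_i) · t_1^{j_1} t_2^{j_2} ··· t_p^{j_p} (sum over tuples (j_0,...,j_p) of positive integers with j_0 + ... + j_p = pk + 1) equals P_k(1, t_1, ..., t_p), i.e. F_k(t_1,...,t_p) = Σ_{π ∈ NC²_{2pk}(W_0^k)} t_1^{j_1(π)} t_2^{j_2(π)} ··· t_p^{j_p(π)}. -/

import Mathlib

/-- The letter at position `r` (1-based, `1 ≤ r ≤ 2p`) of the word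
`W₀ = 1 2 … p p* … 2* 1*`; here `(l, false)` encodes the letter `l` and
`(l, true)` encodes the starred letter `l*`. -/
def letter0 (p r : ℕ) : ℕ × Bool :=
  if r ≤ p then (r, false) else (2 * p + 1 - r, true)

/-- The label of position `m` (1-based) under the periodic word `Wᵢᵏ`, where `Wᵢ`
is the cyclic shift of `W₀` to the right by `i` positions. -/
def labelW (p i m : ℕ) : ℕ × Bool :=
  letter0 p ((m - 1 + (2 * p - i)) % (2 * p) + 1)

/-- `π` is a noncrossing pair partition of `{1, …, m}`, encoded as the finite set of
its blocks, each block written as an ordered pair `(a, b)` with `a < b`: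
all entries lie in `{1, …, m}`, every point of `{1, …, m}` is covered, distinct
blocks are disjoint, and no two blocks cross. -/
def IsNCPP (m : ℕ) (π : Finset (ℕ × ℕ)) : Prop :=
  (∀ b ∈ π, 1 ≤ b.1 ∧ b.2 ≤ m ∧ b.1 < b.2) ∧
  (∀ x, 1 ≤ x → x ≤ m → ∃ b ∈ π, x = b.1 ∨ x = b.2) ∧
  (∀ b ∈ π, ∀ c ∈ π, (b.1 = c.1 ∨ b.1 = c.2 ∨ b.2 = c.1 ∨ b.2 = c.2) → b = c) ∧
  (∀ b ∈ π, ∀ c ∈ π, ¬(b.1 < c.1 ∧ c.1 < b.2 ∧ b.2 < c.2))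

/-- `π ∈ NC²₂ₚₖ(Wᵢᵏ)`: a noncrossing pair partition of `{1, …, 2pk}` each of whose
blocks consists of a position labelled `l` and a position labelled `l*` for some
`l ∈ {1, …, p}` (labels taken from the word `Wᵢᵏ`). -/
def AdaptedNCPP (p i k : ℕ) (π : Finset (ℕ × ℕ)) : Prop :=
  IsNCPP (2 * p * k) π ∧
  ∀ b ∈ π, ∃ l, 1 ≤ l ∧ l ≤ p ∧
    ((labelW p i b.1 = (l, false) ∧ labelW p i b.2 = (l, true)) ∨
     (labelW p i b.1 = (l, true) ∧ labelW p i b.2 = (l, false)))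

/-- The right-leg statistic `jₗ(π) = |R_{l+1}(π)| + |R_{l}*(π)|`: the number of blocks
whose right leg (larger element) is labelled `l+1`, plus the number of blocks whose
right leg is labelled `l*` (the conventions `R₀* = R_{p+1} = ∅` hold automatically,
since those labels never occur). -/
def jstat (p i : ℕ) (π : Finset (ℕ × ℕ)) (l : ℕ) : ℕ :=
  (π.filter fun b => labelW p i b.2 = (l + 1, false)).card +
  (π.filter fun b => labelW p i b.2 = (l, true)).card

open Classical in
/-- The finset `NC²₂ₚₖ(Wᵢᵏ)` of noncrossing pair partitions of `{1, …, 2pk}`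
adapted to `Wᵢᵏ`. -/
noncomputable def NCset (p i k : ℕ) : Finset (Finset (ℕ × ℕ)) :=
  (Finset.Icc 1 (2 * p * k) ×ˢ Finset.Icc 1 (2 * p * k)).powerset.filter
    (AdaptedNCPP p i k)

open Classical in
/-- `Nᵢ(k, (j₀, …, j_p))`: the number of `π ∈ NC²₂ₚₖ(Wᵢᵏ)` with `jₗ(π) = jₗ`
for all `0 ≤ l ≤ p`. -/
noncomputable def Ncount (p i k : ℕ) (j : Fin (p + 1) → ℕ) : ℕ :=
  ((NCset p i k).filter fun π => ∀ l : Fin (p + 1), jstat p i π (l : ℕ) = j l).card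

/-- The generating function `𝒩ᵢ(x, d) = Σ_k (Σ_j Nᵢ(k, j) d^j) x^k ∈ ℝ[[x]]`;
for each `k` only finitely many of the counts `Nᵢ(k, j)` are nonzero, so the inner
`tsum` is a finite sum. -/
noncomputable def genFun (p i : ℕ) (d : Fin (p + 1) → ℝ) : PowerSeries ℝ :=
  PowerSeries.mk fun k =>
    ∑' j : Fin (p + 1) → ℕ, (Ncount p i k j : ℝ) * ∏ l, d l ^ j l

/-! Read each letter `l` of the periodic word as a step up from height `l - 1` to `l` and each
letter `l*` as a step down from `l` to `l - 1`. The word becomes a zigzag path between the heights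
`0` and `p`, adapted partitions pair steps that traverse the same edge in opposite directions, and
`j_l` counts the right legs that start at height `l`; give each of them the weight `d_l`.

Let `𝒩_l` be the generating series, in the number of turns, of the pairings of the closed path
that starts at height `l`. Moving the first step to the end exchanges left and right leg of one arc,
so `d_l 𝒩_l` does not depend on `l` apart from its constant term `d_l`: it equals `d_l + B` with
`B` independent of `l`. Cutting at the first arc, for starting heights `0, 1, …, p` in turn, gives
`B = x ∏ d_l 𝒩_l`. Hence `B = x ∏ (d_l + B)`, and Lagrange inversion yields the coefficients of
`B`. -/

section Lagrange

open scoped Polynomial PowerSeries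

variable {R : Type*} [CommSemiring R]

theorem pow_eq_X_pow_mul_aeval_pow {φ : R[X]} {B : R⟦X⟧}
    (hB : B = PowerSeries.X * Polynomial.aeval B φ) (m : ℕ) :
    B ^ m = PowerSeries.X ^ m * Polynomial.aeval B (φ ^ m) := by
  rw [map_pow, ← mul_pow, ← hB]

theorem coeff_aeval_eq_sum_range {B : R⟦X⟧} (hB : PowerSeries.X ∣ B) (ψ : R[X]) (n : ℕ) :
    PowerSeries.coeff n (Polynomial.aeval B ψ) =
      ∑ i ∈ Finset.range (n + 1), ψ.coeff i * PowerSeries.coeff n (B ^ i) := by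
  have coeff_pow_eq_zero : ∀ i ∉ Finset.range (n + 1),
      ψ.coeff i * PowerSeries.coeff n (B ^ i) = 0 := fun i hi => by
    rw [PowerSeries.X_pow_dvd_iff.1 (pow_dvd_pow_of_dvd hB i) n (by simpa using hi), mul_zero]
  rw [Polynomial.aeval_def, Polynomial.eval₂_eq_sum, Polynomial.sum_def, map_sum]
  simp only [← Algebra.smul_def, PowerSeries.coeff_smul, smul_eq_mul]
  refine Finset.sum_congr_of_eq_on_inter (fun i _ hi => coeff_pow_eq_zero i hi)
    (fun i _ hi => ?_) (fun i _ _ => rfl)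
  rw [Polynomial.notMem_support_iff.1 hi, zero_mul]

theorem add_mul_derivative_pow_mul_pow (φ : R[X]) (m n : ℕ) :
    ((m + n : ℕ) : R[X]) * (Polynomial.derivative (φ ^ m) * φ ^ n) =
      m * Polynomial.derivative (φ ^ (m + n)) := by
  obtain _ | m := m
  · simp
  · rw [Polynomial.derivative_pow, Polynomial.derivative_pow, add_tsub_cancel_right,
      Nat.add_right_comm, add_tsub_cancel_right, pow_add, map_natCast, map_natCast]
    ring

theorem coeff_add_pow_eq_sum_range {φ : R[X]} {B : R⟦X⟧}
    (hB : B = PowerSeries.X * Polynomial.aeval B φ) (m d : ℕ) :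
    PowerSeries.coeff (m + d) (B ^ m) =
      ∑ i ∈ Finset.range (d + 1), (φ ^ m).coeff i * PowerSeries.coeff d (B ^ i) := by
  rw [pow_eq_X_pow_mul_aeval_pow hB, add_comm m, PowerSeries.coeff_X_pow_mul,
    coeff_aeval_eq_sum_range (hB ▸ dvd_mul_right _ _)]

theorem lagrange_inversion [IsAddTorsionFree R] {φ : R[X]} {B : R⟦X⟧}
    (hB : B = PowerSeries.X * Polynomial.aeval B φ) (m d : ℕ) :
    ((m + d : ℕ) : R) * PowerSeries.coeff (m + d) (B ^ m) = m * (φ ^ (m + d)).coeff d := by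
  induction d using Nat.strong_induction_on generalizing m with
  | _ d ih =>
    obtain _ | d := d
    · rw [coeff_add_pow_eq_sum_range hB, Finset.sum_range_one, pow_zero, PowerSeries.coeff_zero_one,
        mul_one, add_zero]
    -- By induction, the sum for `coeff (m + (d + 1)) (B ^ m)` turns into a Cauchy product.
    have sum_eq_coeff : ((d + 1 : ℕ) : R) * PowerSeries.coeff (m + (d + 1)) (B ^ m) =
        (Polynomial.X * (Polynomial.derivative (φ ^ m) * φ ^ (d + 1))).coeff (d + 1) := by
      rw [coeff_add_pow_eq_sum_range hB, Finset.mul_sum, ← mul_assoc, Polynomial.coeff_mul,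
        Finset.Nat.sum_antidiagonal_eq_sum_range_succ_mk]
      refine Finset.sum_congr rfl fun i hi => ?_
      obtain _ | i := i
      · simp
      obtain ⟨e, rfl⟩ : ∃ e, d = i + e := Nat.exists_eq_add_of_le (by simpa using hi)
      have := ih e (by lia) (i + 1)
      rw [Nat.add_right_comm] at this
      rw [mul_left_comm, this, Polynomial.coeff_X_mul, Polynomial.coeff_derivative,
        Nat.add_right_comm, Nat.add_sub_cancel_left]
      push_cast
      ring
    refine nsmul_right_injective (M := R) d.succ_ne_zero ?_
    calc (d + 1) • (((m + (d + 1) : ℕ) : R) * PowerSeries.coeff (m + (d + 1)) (B ^ m))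
        = ((m + (d + 1) : ℕ) : R) *
            (Polynomial.X * (Polynomial.derivative (φ ^ m) * φ ^ (d + 1))).coeff (d + 1) := by
          rw [← sum_eq_coeff, nsmul_eq_mul, mul_left_comm]
      _ = (Polynomial.X *
            ((m : R[X]) * Polynomial.derivative (φ ^ (m + (d + 1))))).coeff (d + 1) := by
          simp only [← add_mul_derivative_pow_mul_pow, Polynomial.coeff_X_mul,
            Polynomial.coeff_natCast_mul]
      _ = (d + 1) • (m * (φ ^ (m + (d + 1))).coeff (d + 1)) := by
          rw [Polynomial.coeff_X_mul, Polynomial.coeff_natCast_mul, Polynomial.coeff_derivative,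
            nsmul_eq_mul]
          push_cast
          ring

theorem coeff_prod_C_add_X_pow {ι : Type*} [Fintype ι] [DecidableEq ι] (d : ι → R) (k n : ℕ) :
    ((∏ l, (Polynomial.C (d l) + Polynomial.X)) ^ k).coeff n =
      ∑ j ∈ Fintype.piFinset (fun _ : ι => Finset.range (k + 1)) with ∑ l, (k - j l) = n,
        ∏ l, (k.choose (j l) * d l ^ j l) := by
  have expand : (∏ l, (Polynomial.C (d l) + Polynomial.X)) ^ k =
      ∑ j ∈ Fintype.piFinset (fun _ : ι => Finset.range (k + 1)),
        Polynomial.C (∏ l, (k.choose (j l) * d l ^ j l)) * Polynomial.X ^ ∑ l, (k - j l) := by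
    simp_rw [← Finset.prod_pow, add_pow, Finset.prod_univ_sum]
    refine Finset.sum_congr rfl fun j _ => ?_
    rw [← Finset.prod_pow_eq_pow_sum, map_prod, ← Finset.prod_mul_distrib]
    refine Finset.prod_congr rfl fun l _ => ?_
    rw [map_mul, map_pow, map_natCast]
    ring
  rw [expand, Polynomial.finsetSum_coeff, Finset.sum_filter]
  simp only [Polynomial.coeff_C_mul, Polynomial.coeff_X_pow, mul_ite, mul_one, mul_zero, eq_comm]

theorem coeff_prod_C_add_X_pow_pred {p k : ℕ} (hk : 1 ≤ k) (d : Fin (p + 1) → R) :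
    ((∏ l, (Polynomial.C (d l) + Polynomial.X)) ^ k).coeff (k - 1) =
      ∑ j ∈ Finset.Nat.antidiagonalTuple (p + 1) (p * k + 1) with ∀ l, 1 ≤ j l,
        ∏ l, (k.choose (j l) * d l ^ j l) := by
  rw [coeff_prod_C_add_X_pow]
  have sum_sub_add_sum : ∀ j : Fin (p + 1) → ℕ, (∀ l, j l ≤ k) →
      ∑ l, (k - j l) + ∑ l, j l = p * k + k := fun j hj => by
    rw [← Finset.sum_add_distrib, Finset.sum_congr rfl fun l _ => Nat.sub_add_cancel (hj l)]
    simp [Nat.succ_mul]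
  refine Finset.sum_subset (fun j hj => ?_) (fun j hj hj' => ?_)
  · simp only [Finset.mem_filter, Fintype.mem_piFinset, Finset.mem_range_succ_iff,
      Finset.Nat.mem_antidiagonalTuple] at hj ⊢
    have hsum := sum_sub_add_sum j hj.1
    refine ⟨by lia, fun l => ?_⟩
    have := Finset.single_le_sum (f := fun l => k - j l) (by simp) (Finset.mem_univ l)
    lia
  · simp only [Finset.mem_filter, Fintype.mem_piFinset, Finset.mem_range_succ_iff,
      Finset.Nat.mem_antidiagonalTuple] at hj hj'
    obtain ⟨l, hl⟩ : ∃ l, k < j l := by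
      by_contra! hle
      have := sum_sub_add_sum j hle
      exact hj' ⟨hle, by lia⟩
    refine Finset.prod_eq_zero (Finset.mem_univ l) ?_
    rw [Nat.choose_eq_zero_of_lt hl, Nat.cast_zero, zero_mul]

end Lagrange

/-- The noncrossing pair partitions of the integer interval `[i, j)`, encoded by their blocks as in
`IsNCPP`; this is the form that is stable under cutting at an arc. -/
structure IsNoncrossingPairing (i j : ℕ) (π : Finset (ℕ × ℕ)) : Prop where
  bounds : ∀ b ∈ π, i ≤ b.1 ∧ b.1 < b.2 ∧ b.2 < j
  cover : ∀ x, i ≤ x → x < j → ∃ b ∈ π, x = b.1 ∨ x = b.2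
  eq_of_meet : ∀ b ∈ π, ∀ c ∈ π, (b.1 = c.1 ∨ b.1 = c.2 ∨ b.2 = c.1 ∨ b.2 = c.2) → b = c
  not_cross : ∀ b ∈ π, ∀ c ∈ π, ¬(b.1 < c.1 ∧ c.1 < b.2 ∧ b.2 < c.2)

/-- The blocks of `π` lying in the interval `[a, b)`. -/
def arcsWithin (a b : ℕ) (π : Finset (ℕ × ℕ)) : Finset (ℕ × ℕ) :=
  π.filter fun c => a ≤ c.1 ∧ c.2 < b

namespace IsNoncrossingPairing

variable {i j m : ℕ} {π ρ σ : Finset (ℕ × ℕ)}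

theorem empty (i : ℕ) : IsNoncrossingPairing i i ∅ where
  bounds := by simp
  cover x h h' := by lia
  eq_of_meet := by simp
  not_cross := by simp

theorem eq_empty (h : IsNoncrossingPairing i i π) : π = ∅ :=
  Finset.eq_empty_of_forall_notMem fun b hb => by
    have := h.bounds b hb
    lia

theorem le_right (hπ : IsNoncrossingPairing i j π) {b : ℕ × ℕ} (hb : b ∈ π) : i ≤ b.2 :=
  (hπ.bounds b hb).1.trans (hπ.bounds b hb).2.1.le

theorem union (hρ : IsNoncrossingPairing i m ρ) (hσ : IsNoncrossingPairing m j σ) (him : i ≤ m)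
    (hmj : m ≤ j) : IsNoncrossingPairing i j (ρ ∪ σ) where
  bounds b hb := by
    obtain hb | hb := Finset.mem_union.1 hb
    · exact (hρ.bounds b hb).imp_right (.imp_right (·.trans_le hmj))
    · exact (hσ.bounds b hb).imp_left him.trans
  cover x hix hxj := by
    obtain hxm | hmx := lt_or_ge x m
    · obtain ⟨b, hb, hx⟩ := hρ.cover x hix hxm
      exact ⟨b, Finset.mem_union_left _ hb, hx⟩
    · obtain ⟨b, hb, hx⟩ := hσ.cover x hmx hxj
      exact ⟨b, Finset.mem_union_right _ hb, hx⟩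
  eq_of_meet b hb c hc h := by
    obtain hb | hb := Finset.mem_union.1 hb <;> obtain hc | hc := Finset.mem_union.1 hc
    · exact hρ.eq_of_meet b hb c hc h
    · have := hρ.bounds b hb
      have := hσ.bounds c hc
      lia
    · have := hσ.bounds b hb
      have := hρ.bounds c hc
      lia
    · exact hσ.eq_of_meet b hb c hc h
  not_cross b hb c hc := by
    obtain hb | hb := Finset.mem_union.1 hb <;> obtain hc | hc := Finset.mem_union.1 hc
    · exact hρ.not_cross b hb c hc
    · have := hρ.bounds b hb
      have := hσ.bounds c hc
      lia
    · have := hσ.bounds b hb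
      have := hρ.bounds c hc
      lia
    · exact hσ.not_cross b hb c hc

theorem insert_arc (hρ : IsNoncrossingPairing (i + 1) m ρ) (him : i < m) :
    IsNoncrossingPairing i (m + 1) (insert (i, m) ρ) where
  bounds b hb := by
    obtain rfl | hb := Finset.mem_insert.1 hb
    · lia
    · have := hρ.bounds b hb
      lia
  cover x hix hxm := by
    obtain h | h : (x = i ∨ x = m) ∨ (i + 1 ≤ x ∧ x < m) := by lia
    · exact ⟨(i, m), Finset.mem_insert_self _ _, h⟩
    · obtain ⟨b, hb, hx⟩ := hρ.cover x h.1 h.2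
      exact ⟨b, Finset.mem_insert_of_mem hb, hx⟩
  eq_of_meet b hb c hc h := by
    obtain rfl | hb := Finset.mem_insert.1 hb <;> obtain rfl | hc := Finset.mem_insert.1 hc
    · rfl
    · have := hρ.bounds c hc
      lia
    · have := hρ.bounds b hb
      lia
    · exact hρ.eq_of_meet b hb c hc h
  not_cross b hb c hc := by
    obtain rfl | hb := Finset.mem_insert.1 hb <;> obtain rfl | hc := Finset.mem_insert.1 hc
    · lia
    · have := hρ.bounds c hc
      lia
    · have := hρ.bounds b hb
      lia
    · exact hρ.not_cross b hb c hc

theorem join (hρ : IsNoncrossingPairing (i + 1) m ρ) (hσ : IsNoncrossingPairing (m + 1) j σ)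
    (him : i < m) (hmj : m < j) : IsNoncrossingPairing i j (insert (i, m) (ρ ∪ σ)) := by
  rw [← Finset.insert_union]
  exact (hρ.insert_arc him).union hσ (by lia) hmj

theorem trichotomy (hπ : IsNoncrossingPairing i j π) (him : (i, m) ∈ π) {b : ℕ × ℕ} (hb : b ∈ π) :
    b = (i, m) ∨ (i + 1 ≤ b.1 ∧ b.2 < m) ∨ (m + 1 ≤ b.1 ∧ b.2 < j) := by
  have hbounds := hπ.bounds b hb
  have hmeet := hπ.eq_of_meet b hb _ him
  have hcross := hπ.not_cross _ him b hb
  grind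

theorem arcsWithin_of_closed (hπ : IsNoncrossingPairing i j π) {a b : ℕ} (hia : i ≤ a) (hbj : b ≤ j)
    (hclosed : ∀ c ∈ π, (a ≤ c.1 ∧ c.2 < b) ∨ ((c.1 < a ∨ b ≤ c.1) ∧ (c.2 < a ∨ b ≤ c.2))) :
    IsNoncrossingPairing a b (arcsWithin a b π) where
  bounds c hc := by
    have hc := Finset.mem_filter.1 hc
    exact ⟨hc.2.1, (hπ.bounds c hc.1).2.1, hc.2.2⟩
  cover x hax hxb := by
    obtain ⟨c, hc, hx⟩ := hπ.cover x (hia.trans hax) (hxb.trans_le hbj)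
    have := hclosed c hc
    exact ⟨c, Finset.mem_filter.2 ⟨hc, by lia⟩, hx⟩
  eq_of_meet c hc c' hc' := hπ.eq_of_meet c (Finset.filter_subset _ _ hc) c'
    (Finset.filter_subset _ _ hc')
  not_cross c hc c' hc' := hπ.not_cross c (Finset.filter_subset _ _ hc) c'
    (Finset.filter_subset _ _ hc')

theorem arcsWithin_inside (hπ : IsNoncrossingPairing i j π) (him : (i, m) ∈ π) :
    IsNoncrossingPairing (i + 1) m (arcsWithin (i + 1) m π) := by
  have hbounds := hπ.bounds _ him
  refine hπ.arcsWithin_of_closed (by lia) (by lia) fun c hc => ?_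
  have := hπ.bounds c hc
  grind [hπ.trichotomy him hc]

theorem arcsWithin_outside (hπ : IsNoncrossingPairing i j π) (him : (i, m) ∈ π) :
    IsNoncrossingPairing (m + 1) j (arcsWithin (m + 1) j π) := by
  have hbounds := hπ.bounds _ him
  refine hπ.arcsWithin_of_closed (by lia) le_rfl fun c hc => ?_
  have := hπ.bounds c hc
  grind [hπ.trichotomy him hc]

theorem insert_arcsWithin (hπ : IsNoncrossingPairing i j π) (him : (i, m) ∈ π) :
    insert (i, m) (arcsWithin (i + 1) m π ∪ arcsWithin (m + 1) j π) = π := by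
  ext b
  have := hπ.trichotomy him (b := b)
  grind [arcsWithin]

theorem arcsWithin_join_inside (hρ : IsNoncrossingPairing (i + 1) m ρ)
    (hσ : IsNoncrossingPairing (m + 1) j σ) :
    arcsWithin (i + 1) m (insert (i, m) (ρ ∪ σ)) = ρ := by
  ext b
  have := hρ.bounds b
  have := hσ.bounds b
  grind [arcsWithin]

theorem arcsWithin_join_outside (hρ : IsNoncrossingPairing (i + 1) m ρ)
    (hσ : IsNoncrossingPairing (m + 1) j σ) (him : i < m) :
    arcsWithin (m + 1) j (insert (i, m) (ρ ∪ σ)) = σ := by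
  ext b
  have := hρ.bounds b
  have := hσ.bounds b
  grind [arcsWithin]

theorem exists_first_arc (hπ : IsNoncrossingPairing i j π) (hij : i < j) :
    ∃ m, (i, m) ∈ π := by
  obtain ⟨⟨a, m⟩, ham, h⟩ := hπ.cover i le_rfl hij
  obtain rfl : i = a := by grind [hπ.bounds _ ham]
  exact ⟨m, ham⟩

theorem prod_join {R : Type*} [CommMonoid R] (ω : ℕ → ℕ → R)
    (hρ : IsNoncrossingPairing (i + 1) m ρ) (hσ : IsNoncrossingPairing (m + 1) j σ) (him : i < m) :
    ∏ b ∈ insert (i, m) (ρ ∪ σ), ω b.1 b.2 =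
      ω i m * ((∏ b ∈ ρ, ω b.1 b.2) * ∏ b ∈ σ, ω b.1 b.2) := by
  rw [Finset.prod_insert, Finset.prod_union]
  · exact Finset.disjoint_left.2 fun b hb hb' => by
      have := hρ.bounds b hb
      have := hσ.bounds b hb'
      lia
  · have := hρ.bounds (i, m)
    have := hσ.bounds (i, m)
    grind

end IsNoncrossingPairing

open Classical in
/-- The finset of all `π` with `IsNoncrossingPairing i j π`. -/
noncomputable def noncrossingPairings (i j : ℕ) : Finset (Finset (ℕ × ℕ)) :=
  (Finset.Ico i j ×ˢ Finset.Ico i j).powerset.filter (IsNoncrossingPairing i j)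

theorem mem_noncrossingPairings {i j : ℕ} {π : Finset (ℕ × ℕ)} :
    π ∈ noncrossingPairings i j ↔ IsNoncrossingPairing i j π := by
  simp only [noncrossingPairings, Finset.mem_filter, Finset.mem_powerset, and_iff_right_iff_imp]
  intro hπ b hb
  grind [hπ.bounds b hb]

section PairingSum

variable {R : Type*} [CommSemiring R]

/-- The total weight of the noncrossing pairings of `[i, j)`, where an arc from `x` to `y`
contributes the factor `ω x y`; arcs that are to be forbidden get weight `0`. -/
noncomputable def pairingSum (ω : ℕ → ℕ → R) (i j : ℕ) : R :=
  ∑ π ∈ noncrossingPairings i j, ∏ b ∈ π, ω b.1 b.2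

variable (ω : ℕ → ℕ → R)

theorem pairingSum_self (i : ℕ) : pairingSum ω i i = 1 := by
  have : noncrossingPairings i i = {∅} := by
    ext π
    rw [mem_noncrossingPairings, Finset.mem_singleton]
    exact ⟨fun h => h.eq_empty, fun h => h ▸ .empty i⟩
  rw [pairingSum, this, Finset.sum_singleton, Finset.prod_empty]

theorem sum_pairings_with_arc {i j m : ℕ} (him : i < m) (hmj : m < j) :
    ∑ π ∈ noncrossingPairings i j with (i, m) ∈ π, ∏ b ∈ π, ω b.1 b.2 =
      ω i m * (pairingSum ω (i + 1) m * pairingSum ω (m + 1) j) := by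
  rw [pairingSum, pairingSum, Finset.sum_mul_sum, ← Finset.sum_product', Finset.mul_sum]
  symm
  refine Finset.sum_bij' (fun q _ => insert (i, m) (q.1 ∪ q.2))
    (fun π _ => (arcsWithin (i + 1) m π, arcsWithin (m + 1) j π)) ?_ ?_ ?_ ?_ ?_
  all_goals simp only [Finset.mem_filter, Finset.mem_product, mem_noncrossingPairings]
  · exact fun q hq => ⟨hq.1.join hq.2 him hmj, Finset.mem_insert_self _ _⟩
  · exact fun π hπ => ⟨hπ.1.arcsWithin_inside hπ.2, hπ.1.arcsWithin_outside hπ.2⟩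
  · exact fun q hq => Prod.ext (hq.1.arcsWithin_join_inside hq.2)
      (hq.1.arcsWithin_join_outside hq.2 him)
  · exact fun π hπ => hπ.1.insert_arcsWithin hπ.2
  · exact fun q hq => (hq.1.prod_join ω hq.2 him).symm

theorem pairingSum_eq_sum_first_arc {i j : ℕ} (hij : i < j) :
    pairingSum ω i j = ∑ m ∈ Finset.Ico (i + 1) j,
      ω i m * (pairingSum ω (i + 1) m * pairingSum ω (m + 1) j) := by
  classical
  have split_by_first_arc : noncrossingPairings i j =
      (Finset.Ico (i + 1) j).biUnion fun m => {π ∈ noncrossingPairings i j | (i, m) ∈ π} := by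
    ext π
    simp only [Finset.mem_biUnion, Finset.mem_filter, Finset.mem_Ico, mem_noncrossingPairings]
    refine ⟨fun hπ => ?_, fun ⟨_, _, hπ, _⟩ => hπ⟩
    obtain ⟨m, him⟩ := hπ.exists_first_arc hij
    exact ⟨m, (hπ.bounds _ him).2, hπ, him⟩
  rw [pairingSum, split_by_first_arc, Finset.sum_biUnion]
  · refine Finset.sum_congr rfl fun m hm => ?_
    rw [Finset.mem_Ico] at hm
    exact sum_pairings_with_arc ω hm.1 hm.2
  · refine fun m _ m' _ hne => Finset.disjoint_left.2 fun π hπ hπ' => hne ?_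
    simp only [Finset.mem_filter, mem_noncrossingPairings] at hπ hπ'
    exact congrArg Prod.snd (hπ.1.eq_of_meet _ hπ.2 _ hπ'.2 (.inl rfl))

theorem pairingSum_eq_sum_last_arc {i j : ℕ} (hij : i ≤ j) :
    pairingSum ω i (j + 1) = ∑ m ∈ Finset.Ico i j,
      ω m j * (pairingSum ω i m * pairingSum ω (m + 1) j) := by
  induction hn : j - i using Nat.strong_induction_on generalizing i with
  | _ n ih =>
    rw [pairingSum_eq_sum_first_arc ω (by lia)]
    obtain rfl | hlt := hij.eq_or_lt
    · simp
    rw [Finset.sum_Ico_succ_top hlt, Finset.sum_eq_sum_Ico_succ_bot hlt, pairingSum_self,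
      pairingSum_self, add_comm, mul_comm (pairingSum ω (i + 1) j)]
    congr 1
    -- Cut off the first arc, then the last arc of the part to its right, and swap the two sums.
    calc ∑ m ∈ Finset.Ico (i + 1) j,
          ω i m * (pairingSum ω (i + 1) m * pairingSum ω (m + 1) (j + 1))
        = ∑ m ∈ Finset.Ico (i + 1) j, ∑ l ∈ Finset.Ico (m + 1) j, ω i m * ω l j *
            (pairingSum ω (i + 1) m * pairingSum ω (m + 1) l * pairingSum ω (l + 1) j) := by
          refine Finset.sum_congr rfl fun m hm => ?_
          rw [Finset.mem_Ico] at hm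
          rw [ih (j - (m + 1)) (by lia) (by lia) rfl, Finset.mul_sum, Finset.mul_sum]
          exact Finset.sum_congr rfl fun l _ => by ring
      _ = ∑ l ∈ Finset.Ico (i + 1) j, ∑ m ∈ Finset.Ico (i + 1) l, ω i m * ω l j *
            (pairingSum ω (i + 1) m * pairingSum ω (m + 1) l * pairingSum ω (l + 1) j) :=
          Finset.sum_comm' fun m l => by grind
      _ = ∑ l ∈ Finset.Ico (i + 1) j,
            ω l j * (pairingSum ω i l * pairingSum ω (l + 1) j) := by
          refine Finset.sum_congr rfl fun l hl => ?_
          rw [Finset.mem_Ico] at hl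
          rw [pairingSum_eq_sum_first_arc ω hl.1, Finset.sum_mul, Finset.mul_sum]
          exact Finset.sum_congr rfl fun m _ => by ring

variable {ω} in
theorem mul_pairingSum_eq_mul_pairingSum_succ {i j : ℕ} {s t : R} (hij : i < j)
    (hω : ∀ m, s * ω i m = t * ω m j) :
    s * pairingSum ω i j = t * pairingSum ω (i + 1) (j + 1) := by
  rw [pairingSum_eq_sum_first_arc ω hij, pairingSum_eq_sum_last_arc ω hij, Finset.mul_sum,
    Finset.mul_sum]
  exact Finset.sum_congr rfl fun m _ => by rw [← mul_assoc, hω, mul_assoc]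

theorem pairingSum_translate (N : ℕ) {i j : ℕ} (hij : i ≤ j) :
    pairingSum ω (i + N) (j + N) = pairingSum (fun x y => ω (x + N) (y + N)) i j := by
  induction hn : j - i using Nat.strong_induction_on generalizing i j with
  | _ n ih =>
    obtain rfl | hlt := hij.eq_or_lt
    · rw [pairingSum_self, pairingSum_self]
    rw [pairingSum_eq_sum_first_arc _ (by lia), pairingSum_eq_sum_first_arc _ hlt,
      Nat.add_right_comm, ← Finset.sum_Ico_add']
    refine Finset.sum_congr rfl fun m hm => ?_
    rw [Finset.mem_Ico] at hm
    rw [Nat.add_right_comm m, ih _ (by lia) hm.1 rfl, ih _ (by lia) hm.2 rfl]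

end PairingSum

section ArcWeight

variable {R : Type*} [CommSemiring R]

/-- Read `c : ℕ → ℕ` as a path whose `x`-th step leads from `c x` to `c (x + 1)`. An arc from `x` to
`y` is allowed if its two steps traverse the same edge in opposite directions, and it then has
weight `T (c y)`. -/
def arcWeight (c : ℕ → ℕ) (T : ℕ → R) (x y : ℕ) : R :=
  if c x = c (y + 1) ∧ c (x + 1) = c y then T (c y) else 0

theorem pairingSum_arcWeight (c : ℕ → ℕ) (T : ℕ → R) (i j : ℕ) :
    pairingSum (arcWeight c T) i j =
      ∑ π ∈ noncrossingPairings i j with ∀ b ∈ π, c b.1 = c (b.2 + 1) ∧ c (b.1 + 1) = c b.2,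
        ∏ b ∈ π, T (c b.2) := by
  simp only [pairingSum, arcWeight, Finset.prod_ite_zero, Finset.sum_filter]

theorem arcWeight_translate (c : ℕ → ℕ) (T : ℕ → R) (N : ℕ) :
    (fun x y => arcWeight c T (x + N) (y + N)) = arcWeight (fun x => c (x + N)) T := by
  simp only [arcWeight, Nat.add_right_comm _ N 1]
  rfl

variable {c : ℕ → ℕ} {n : ℕ}

theorem pairingSum_arcWeight_translate (hc : Function.Periodic c n) (T : ℕ → R) {i j : ℕ}
    (hij : i ≤ j) :
    pairingSum (arcWeight c T) (i + n) (j + n) = pairingSum (arcWeight c T) i j := by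
  rw [pairingSum_translate _ _ hij, arcWeight_translate, funext hc]

theorem mul_pairingSum_arcWeight_eq (hc : Function.Periodic c n) (hn : 0 < n) (T : ℕ → R) (i : ℕ) :
    T (c i) * pairingSum (arcWeight c T) i (i + n) = T (c 0) * pairingSum (arcWeight c T) 0 n := by
  induction i with
  | zero => rw [Nat.zero_add]
  | succ i ih =>
    rw [← ih, Nat.add_right_comm]
    -- Step `i` moves to position `i + n`, where it becomes a right leg.
    refine (mul_pairingSum_eq_mul_pairingSum_succ (by lia) fun m => ?_).symm
    simp only [arcWeight, Nat.add_right_comm i n 1, hc i, hc (i + 1)]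
    by_cases h : c i = c (m + 1) ∧ c (i + 1) = c m
    · rw [if_pos h, if_pos ⟨h.2.symm, h.1.symm⟩, h.2, mul_comm]
    · rw [if_neg h, if_neg fun h' => h ⟨h'.2.symm, h'.1.symm⟩, mul_zero, mul_zero]

end ArcWeight

section Zigzag

/-- The `2p`-periodic path `0, 1, …, p, p - 1, …, 1, 0, 1, …`: reading a letter `l` of the periodic
word as a step up from `l - 1` to `l` and a letter `l*` as a step down from `l` to `l - 1`, this is
the path described by the word. -/
def zigzag (p x : ℕ) : ℕ :=
  min (x % (2 * p)) (2 * p - x % (2 * p))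

theorem zigzag_periodic (p q : ℕ) : Function.Periodic (zigzag p) (2 * p * q) := fun x => by
  rw [zigzag, zigzag, Nat.add_mul_mod_self_left]

theorem zigzag_of_le {p r : ℕ} (hr : r ≤ 2 * p) : zigzag p r = min r (2 * p - r) := by
  obtain rfl | hlt := hr.eq_or_lt
  · simp [zigzag]
  · rw [zigzag, Nat.mod_eq_of_lt hlt]

theorem zigzag_two_mul_sub {p l : ℕ} (hl : l ≤ p) : zigzag p (2 * p - l) = l := by
  rw [zigzag_of_le (by lia)]
  lia

theorem zigzag_succ_eq_min {p : ℕ} (hp : 1 ≤ p) (x : ℕ) :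
    zigzag p (x + 1) = min (x % (2 * p) + 1) (2 * p - (x % (2 * p) + 1)) := by
  have hlt : x % (2 * p) < 2 * p := Nat.mod_lt _ (by lia)
  conv_lhs => rw [← Nat.mod_add_div x (2 * p), Nat.add_right_comm, zigzag_periodic p _ _]
  exact zigzag_of_le hlt

theorem zigzag_step_down_iff {p l : ℕ} (hl : l < p) (x : ℕ) :
    l = zigzag p (x + 1) ∧ l + 1 = zigzag p x ↔ ∃ a, x = 2 * p - (l + 1) + 2 * p * a := by
  have hlt : x % (2 * p) < 2 * p := Nat.mod_lt _ (by lia)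
  have hx := Nat.mod_add_div x (2 * p)
  rw [zigzag_succ_eq_min (by lia), zigzag]
  constructor
  · exact fun h => ⟨x / (2 * p), by lia⟩
  · rintro ⟨a, rfl⟩
    rw [Nat.add_mul_mod_self_left, Nat.mod_eq_of_lt (by lia)]
    lia

end Zigzag

section Series

open scoped Polynomial PowerSeries

variable {R : Type*} [CommSemiring R] (p : ℕ) (T : ℕ → R)

/-- The series `𝒩_l` of the paper: its `q`-th coefficient is the total weight of the pairings of
`q` full turns of the zigzag path, starting on the descending branch at height `l`. -/
noncomputable def loopSeries (l : ℕ) : R⟦X⟧ :=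
  PowerSeries.mk fun q => pairingSum (arcWeight (zigzag p) T) (2 * p - l) (2 * p - l + 2 * p * q)

/-- The series whose `q`-th coefficient is the total weight of the pairings of the stretch of the
zigzag path that starts on the ascending branch at height `l` and ends at height `l` on the
descending branch `q` turns later; it is what remains of a loop under an arc. -/
noncomputable def archSeries (l : ℕ) : R⟦X⟧ :=
  PowerSeries.mk fun q => pairingSum (arcWeight (zigzag p) T) l (2 * p - l + 2 * p * q)

theorem archSeries_self : archSeries p T p = loopSeries p T p := by
  rw [archSeries, loopSeries, two_mul, Nat.add_sub_cancel]

variable {p}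

theorem pairingSum_zigzag_eq_sum_first_return {l : ℕ} (hl : l < p) (q : ℕ) :
    pairingSum (arcWeight (zigzag p) T) l (2 * p - l + 2 * p * q) =
      ∑ a ∈ Finset.range (q + 1), T (l + 1) *
        (pairingSum (arcWeight (zigzag p) T) (l + 1) (2 * p - (l + 1) + 2 * p * a) *
          pairingSum (arcWeight (zigzag p) T) (2 * p - l) (2 * p - l + 2 * p * (q - a))) := by
  have zigzag_l : zigzag p l = l := by rw [zigzag_of_le (by lia)]; lia
  have zigzag_l_succ : zigzag p (l + 1) = l + 1 := by rw [zigzag_of_le (by lia)]; lia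
  rw [pairingSum_eq_sum_first_arc _ (by lia)]
  symm
  refine Finset.sum_of_injOn (fun a => 2 * p - (l + 1) + 2 * p * a) ?_ ?_ ?_ ?_
  · intro a _ b _ hab
    exact Nat.eq_of_mul_eq_mul_left (by lia : 0 < 2 * p) (Nat.add_left_cancel hab)
  · intro a ha
    have := Nat.mul_le_mul_left (2 * p) (Finset.mem_range_succ_iff.1 ha)
    simp only [Finset.coe_Ico, Set.mem_Ico]
    lia
  · intro m hm hm'
    rw [arcWeight, zigzag_l, zigzag_l_succ, if_neg, zero_mul]
    intro step_down
    obtain ⟨a, rfl⟩ := (zigzag_step_down_iff hl m).1 step_down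
    have hlt : 2 * p * a < 2 * p * (q + 1) := by
      have := (Finset.mem_Ico.1 hm).2
      rw [Nat.mul_succ]
      lia
    exact hm' ⟨a, Finset.mem_coe.2 (Finset.mem_range.2 (Nat.lt_of_mul_lt_mul_left hlt)), rfl⟩
  · intro a ha
    have ha : a ≤ q := Finset.mem_range_succ_iff.1 ha
    have step_down := (zigzag_step_down_iff hl _).2 ⟨a, rfl⟩
    have succ_arc : 2 * p - (l + 1) + 2 * p * a + 1 = 2 * p - l + 2 * p * a := by lia
    have split_turns : 2 * p - l + 2 * p * q = 2 * p - l + 2 * p * (q - a) + 2 * p * a := by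
      rw [Nat.add_assoc, ← Nat.mul_add, Nat.sub_add_cancel ha]
    rw [arcWeight, zigzag_l, zigzag_l_succ, if_pos step_down, ← step_down.2, succ_arc, split_turns,
      pairingSum_arcWeight_translate (zigzag_periodic p a) T (Nat.le_add_right _ _)]

theorem archSeries_eq_mul {l : ℕ} (hl : l < p) :
    archSeries p T l = PowerSeries.C (T (l + 1)) * archSeries p T (l + 1) * loopSeries p T l := by
  ext q
  rw [mul_assoc, PowerSeries.coeff_C_mul, PowerSeries.coeff_mul,
    Finset.Nat.sum_antidiagonal_eq_sum_range_succ_mk, Finset.mul_sum]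
  simp only [archSeries, loopSeries, PowerSeries.coeff_mk]
  exact pairingSum_zigzag_eq_sum_first_return T hl q

theorem C_mul_archSeries_eq_prod {l : ℕ} (hl : l ≤ p) :
    PowerSeries.C (T l) * archSeries p T l =
      ∏ m ∈ Finset.Ico l (p + 1), PowerSeries.C (T m) * loopSeries p T m := by
  induction hl using Nat.decreasingInduction with
  | self => rw [archSeries_self, Nat.Ico_succ_singleton, Finset.prod_singleton]
  | of_succ l hl ih =>
    rw [Finset.prod_eq_prod_Ico_succ_bot (by lia), ← ih, archSeries_eq_mul T hl]
    ring

theorem C_mul_loopSeries {l : ℕ} (hp : 1 ≤ p) (hl : l ≤ p) :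
    PowerSeries.C (T l) * loopSeries p T l =
      PowerSeries.C (T l) + PowerSeries.X * (PowerSeries.C (T 0) * archSeries p T 0) := by
  ext q
  rw [map_add, PowerSeries.coeff_C_mul, loopSeries, PowerSeries.coeff_mk]
  obtain _ | q := q
  · simp [pairingSum_self]
  · have rotate := mul_pairingSum_arcWeight_eq (zigzag_periodic p (q + 1)) (by positivity) T
      (2 * p - l)
    rw [zigzag_two_mul_sub hl] at rotate
    rw [rotate, PowerSeries.coeff_C, if_neg q.succ_ne_zero, zero_add, PowerSeries.coeff_succ_X_mul,
      PowerSeries.coeff_C_mul, archSeries, PowerSeries.coeff_mk, zigzag_of_le (Nat.zero_le _),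
      Nat.zero_min, Nat.sub_zero, Nat.mul_succ, Nat.add_comm]

theorem X_mul_archSeries_eq_aeval (hp : 1 ≤ p) :
    PowerSeries.X * (PowerSeries.C (T 0) * archSeries p T 0) =
      PowerSeries.X * Polynomial.aeval (PowerSeries.X * (PowerSeries.C (T 0) * archSeries p T 0))
        (∏ l : Fin (p + 1), (Polynomial.C (T l) + Polynomial.X)) := by
  conv_lhs => rw [C_mul_archSeries_eq_prod T (Nat.zero_le p), ← Finset.range_eq_Ico,
    Finset.prod_range]
  rw [map_prod]
  congr 1
  refine Finset.prod_congr rfl fun l _ => ?_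
  rw [C_mul_loopSeries T hp (Nat.le_of_lt_succ l.2), map_add, Polynomial.aeval_C,
    Polynomial.aeval_X]
  rfl

theorem mul_pairingSum_zigzag_eq_coeff [IsAddTorsionFree R] {k : ℕ} (hp : 1 ≤ p) (hk : 1 ≤ k)
    {i : ℕ} (hi : i ≤ p) :
    (k : R) * (T i * pairingSum (arcWeight (zigzag p) T) (2 * p - i) (2 * p - i + 2 * p * k)) =
      ((∏ l : Fin (p + 1), (Polynomial.C (T l) + Polynomial.X)) ^ k).coeff (k - 1) := by
  have inversion := lagrange_inversion (X_mul_archSeries_eq_aeval T hp) 1 (k - 1)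
  rw [Nat.add_sub_cancel' hk, pow_one, Nat.cast_one, one_mul] at inversion
  have coeff_loop := congrArg (PowerSeries.coeff k) (C_mul_loopSeries T hp hi)
  rw [map_add, PowerSeries.coeff_C, if_neg (by lia), zero_add, PowerSeries.coeff_C_mul, loopSeries,
    PowerSeries.coeff_mk] at coeff_loop
  rw [coeff_loop, inversion]

end Series

section Word

/-- The height of the path described by the word `Wᵢᵏ` before its `x`-th letter, positions being
counted from `1` as in `labelW`. -/
def wordHeight (p i x : ℕ) : ℕ :=
  zigzag p (x + (2 * p - 1 - i))

/-- The letter read along a step from height `h` to height `h'`. -/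
def stepLetter (h h' : ℕ) : ℕ × Bool :=
  if h < h' then (h', false) else (h, true)

variable {p : ℕ}

theorem letter0_eq_stepLetter (hp : 1 ≤ p) (x : ℕ) :
    letter0 p (x % (2 * p) + 1) = stepLetter (zigzag p x) (zigzag p (x + 1)) := by
  have hlt : x % (2 * p) < 2 * p := Nat.mod_lt _ (by lia)
  rw [letter0, stepLetter, zigzag_succ_eq_min hp, zigzag]
  split_ifs <;> first | lia | (congr 1; lia)

theorem labelW_eq_stepLetter {i x : ℕ} (hp : 1 ≤ p) (hi : i ≤ p) (hx : 1 ≤ x) :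
    labelW p i x = stepLetter (wordHeight p i x) (wordHeight p i (x + 1)) := by
  rw [labelW, letter0_eq_stepLetter hp, wordHeight, wordHeight]
  congr 2 <;> lia

theorem wordHeight_le (p i x : ℕ) : wordHeight p i x ≤ p := by
  rw [wordHeight, zigzag]
  lia

theorem wordHeight_succ (hp : 1 ≤ p) (i x : ℕ) :
    wordHeight p i (x + 1) = wordHeight p i x + 1 ∨
      wordHeight p i x = wordHeight p i (x + 1) + 1 := by
  have hlt : (x + (2 * p - 1 - i)) % (2 * p) < 2 * p := Nat.mod_lt _ (by lia)
  rw [wordHeight, wordHeight, Nat.add_right_comm, zigzag_succ_eq_min hp, zigzag]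
  lia

theorem exists_letter_match_iff {i x y : ℕ} (hp : 1 ≤ p) (hi : i ≤ p) (hx : 1 ≤ x) (hy : 1 ≤ y) :
    (∃ l, 1 ≤ l ∧ l ≤ p ∧ ((labelW p i x = (l, false) ∧ labelW p i y = (l, true)) ∨
      (labelW p i x = (l, true) ∧ labelW p i y = (l, false)))) ↔
    wordHeight p i x = wordHeight p i (y + 1) ∧ wordHeight p i (x + 1) = wordHeight p i y := by
  rw [labelW_eq_stepLetter hp hi hx, labelW_eq_stepLetter hp hi hy, stepLetter, stepLetter]
  have := wordHeight_succ hp i x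
  have := wordHeight_succ hp i y
  have := wordHeight_le p i x
  have := wordHeight_le p i (x + 1)
  constructor
  · rintro ⟨l, -, -, h⟩
    grind
  · intro h
    refine ⟨max (wordHeight p i x) (wordHeight p i (x + 1)), by lia, by lia, ?_⟩
    grind

theorem labelW_right_leg_iff {i y l : ℕ} (hp : 1 ≤ p) (hi : i ≤ p) (hy : 1 ≤ y) :
    labelW p i y = (l + 1, false) ∨ labelW p i y = (l, true) ↔ wordHeight p i y = l := by
  rw [labelW_eq_stepLetter hp hi hy, stepLetter]
  have := wordHeight_succ hp i y
  grind

theorem isNCPP_iff {m : ℕ} {π : Finset (ℕ × ℕ)} :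
    IsNCPP m π ↔ IsNoncrossingPairing 1 (m + 1) π := by
  constructor
  · rintro ⟨hbounds, hcover, hmeet, hcross⟩
    exact ⟨fun b hb => by have := hbounds b hb; lia, fun x h₁ h₂ => hcover x h₁ (by lia), hmeet,
      hcross⟩
  · rintro ⟨hbounds, hcover, hmeet, hcross⟩
    exact ⟨fun b hb => by have := hbounds b hb; lia, fun x h₁ h₂ => hcover x h₁ (by lia), hmeet,
      hcross⟩

theorem NCset_eq_filter {i : ℕ} (hp : 1 ≤ p) (hi : i ≤ p) (k : ℕ) :
    NCset p i k = {π ∈ noncrossingPairings 1 (2 * p * k + 1) | ∀ b ∈ π,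
      wordHeight p i b.1 = wordHeight p i (b.2 + 1) ∧
        wordHeight p i (b.1 + 1) = wordHeight p i b.2} := by
  ext π
  simp only [NCset, AdaptedNCPP, Finset.mem_filter, Finset.mem_powerset, mem_noncrossingPairings,
    isNCPP_iff]
  constructor
  · rintro ⟨-, hπ, hadapted⟩
    exact ⟨hπ, fun b hb => (exists_letter_match_iff hp hi (hπ.bounds b hb).1 (hπ.le_right hb)).1
      (hadapted b hb)⟩
  · rintro ⟨hπ, hadapted⟩
    refine ⟨fun b hb => ?_, hπ, fun b hb =>
      (exists_letter_match_iff hp hi (hπ.bounds b hb).1 (hπ.le_right hb)).2 (hadapted b hb)⟩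
    have := hπ.bounds b hb
    rw [Finset.mem_product, Finset.mem_Icc, Finset.mem_Icc]
    lia

theorem jstat_eq_card {i : ℕ} {π : Finset (ℕ × ℕ)} (hp : 1 ≤ p) (hi : i ≤ p)
    (hπ : ∀ b ∈ π, 1 ≤ b.2) (l : ℕ) :
    jstat p i π l = (π.filter fun b => wordHeight p i b.2 = l).card := by
  rw [jstat, ← Finset.card_union_of_disjoint, ← Finset.filter_or]
  · exact congrArg _ (Finset.filter_congr fun b hb => labelW_right_leg_iff hp hi (hπ b hb))
  · exact Finset.disjoint_filter.2 fun b _ h h' => by simp [h] at h'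

variable {R : Type*} [CommSemiring R]

theorem prod_pow_jstat {i : ℕ} {π : Finset (ℕ × ℕ)} (hp : 1 ≤ p) (hi : i ≤ p)
    (hπ : ∀ b ∈ π, 1 ≤ b.2) (d : Fin (p + 1) → R) :
    ∏ l : Fin (p + 1), d l ^ jstat p i π l =
      ∏ b ∈ π, d (Fin.ofNat (p + 1) (wordHeight p i b.2)) := by
  rw [← Finset.prod_fiberwise' π fun b => Fin.ofNat (p + 1) (wordHeight p i b.2)]
  refine Finset.prod_congr rfl fun l _ => ?_
  rw [Finset.prod_const, jstat_eq_card hp hi hπ]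
  congr 2
  refine Finset.filter_congr fun b _ => ?_
  rw [Fin.ext_iff, Fin.val_ofNat, Nat.mod_eq_of_lt (Nat.lt_succ_of_le (wordHeight_le p i b.2))]

theorem sum_NCset_eq_pairingSum {i : ℕ} (hp : 1 ≤ p) (hi : i ≤ p) (k : ℕ) (d : Fin (p + 1) → R) :
    ∑ π ∈ NCset p i k, ∏ l : Fin (p + 1), d l ^ jstat p i π l =
      pairingSum (arcWeight (zigzag p) fun h => d (Fin.ofNat (p + 1) h))
        (2 * p - i) (2 * p - i + 2 * p * k) := by
  have start_eq : 2 * p - i = 1 + (2 * p - 1 - i) := by lia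
  have end_eq : 1 + (2 * p - 1 - i) + 2 * p * k = 2 * p * k + 1 + (2 * p - 1 - i) := by lia
  rw [start_eq, end_eq, pairingSum_translate _ _ (by lia), arcWeight_translate,
    pairingSum_arcWeight, NCset_eq_filter hp hi]
  refine Finset.sum_congr rfl fun π hπ => ?_
  have hpairing := mem_noncrossingPairings.1 (Finset.mem_filter.1 hπ).1
  exact prod_pow_jstat hp hi (fun b hb => hpairing.le_right hb) d

end Word

theorem F_eq_P_one_general {R : Type*} [CommSemiring R] [IsAddTorsionFree R] {p k : ℕ} (hp : 1 ≤ p)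
    (hk : 1 ≤ k) (i : Fin (p + 1)) (d : Fin (p + 1) → R) :
    ∑ j ∈ Finset.Nat.antidiagonalTuple (p + 1) (p * k + 1) with ∀ l, 1 ≤ j l,
        (∏ l, (k.choose (j l) : R)) * ∏ l, d l ^ j l =
      k * (d i * ∑ π ∈ NCset p i k, ∏ l : Fin (p + 1), d l ^ jstat p i π l) := by
  have hi : (i : ℕ) ≤ p := Nat.le_of_lt_succ i.2
  have count := mul_pairingSum_zigzag_eq_coeff (fun h => d (Fin.ofNat (p + 1) h)) hp hk hi
  simp only [Fin.ofNat_val_eq_self] at count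
  rw [sum_NCset_eq_pairingSum hp hi, count, coeff_prod_C_add_X_pow_pred hk]
  simp only [Finset.prod_mul_distrib]

/-- Corollary 4.1: the multivariate Fuss–Narayana polynomial
`F_k(t₁, …, t_p) = Σ (1/k) ∏ᵢ C(k, jᵢ) · t₁^{j₁} ⋯ t_p^{j_p}` (sum over tuples of
positive integers with `j₀ + ⋯ + j_p = pk + 1`) equals `P_k(1, t₁, …, t_p)`, i.e.
`Σ_{π ∈ NC²₂ₚₖ(W₀ᵏ)} t₁^{j₁(π)} ⋯ t_p^{j_p(π)}`. -/
theorem F_eq_P_one (p k : ℕ) (hp : 1 ≤ p) (hk : 1 ≤ k) (t : Fin p → ℝ) :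
    (∑ j ∈ (Finset.Nat.antidiagonalTuple (p + 1) (p * k + 1)).filter
        (fun j => ∀ l, 1 ≤ j l),
      (1 / (k : ℝ)) * (∏ i, (Nat.choose k (j i) : ℝ)) *
        ∏ l : Fin p, t l ^ j l.succ) =
      ∑ π ∈ NCset p 0 k, ∏ l : Fin p, t l ^ jstat p 0 π ((l : ℕ) + 1) := by
  have general := F_eq_P_one_general hp hk 0 (Fin.cons 1 t : Fin (p + 1) → ℝ)
  have hk_ne : (k : ℝ) ≠ 0 := by positivity
  simp_rw [mul_assoc, ← Finset.mul_sum, one_div, inv_mul_eq_iff_eq_mul₀ hk_ne]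
  simpa [Fin.prod_univ_succ] using general
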